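/- Let P₁ < ⋯ < P_K be an ℓ-dense sequence defining an n-player stingy quantum race (n ≥ 2) with 4enℓ ≤ K, where e is Euler's number. Let T* be the starting point of the coinciding equilibrium. Then 1/(2en) ≤ P_{T*−1} < 1/n. -/

import Mathlib

open Finset

/-!
Put `x i = P i ^ (-1 / (n - 1))`, so that `P i * q i = x (i - 1) - x i`. Telescoping shows that
`r T` has the sign of `x T - ∑ i > T, q i`, and the whole argument consists of estimating this sum.

Since `q i = x i ^ (n - 1) * (x (i - 1) - x i)`, comparison with the integral of `x ^ (n - 1)` gives
`∑ i > T, q i < x T ^ n / n`. If `r T ≤ 0`, as for `T = T* - 1`, then `x T ≤ ∑ i > T, q i`, hence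
`n < 1 / P T`.

Conversely, replacing `1 / P i` by `1 / P c` for `T < i ≤ c` gives
`(x T - x c) / P c ≤ ∑ i > T, q i`. If `r T > 0`, as for `T = T*`, then
`(1 - P c) * x T < x c`, that is `P c * (1 - P c) ^ (n - 1) < P T`. The left side is largest at
`P c = 1 / n`, and density supplies a `c` with `P c` just below `1 / n`, where
`(1 - P c) ^ (n - 1) ≥ 1 / e`. Hence `P T*` is at least about `1 / (e * n)`, and `P (T* - 1)` is at
most one gap smaller.
-/

lemma sum_Icc_pred_sub {G : Type*} [AddCommGroup G] (f : ℕ → G) {a b : ℕ} (hab : a ≤ b) :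
    ∑ i ∈ Icc (a + 1) b, (f (i - 1) - f i) = f a - f b := by
  induction b, hab using Nat.le_induction with
  | base => simp
  | succ b hab ih => rw [sum_Icc_succ_top (by lia), ih, Nat.add_sub_cancel, sub_add_sub_cancel]

lemma mul_rpow_sub_one_mul_sub_le_rpow_sub_rpow {s x y : ℝ} (hs : 1 ≤ s) (hx : 0 ≤ x)
    (hy : 0 < y) : s * y ^ (s - 1) * (x - y) ≤ x ^ s - y ^ s := by
  have bernoulli : 1 + s * (x / y - 1) ≤ (x / y) ^ s := by
    simpa only [add_sub_cancel] using
      one_add_mul_self_le_rpow_one_add (s := x / y - 1) (by linarith [div_nonneg hx hy.le]) hs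
  rw [Real.div_rpow hx hy.le, le_div_iff₀ (by positivity)] at bernoulli
  calc s * y ^ (s - 1) * (x - y) = (1 + s * (x / y - 1)) * y ^ s - y ^ s := by
        rw [Real.rpow_sub_one hy.ne']; field_simp; ring
    _ ≤ x ^ s - y ^ s := by gcongr

lemma exp_neg_one_le_one_sub_rpow {s p : ℝ} (hs : 1 < s) (hp : p ≤ 1 / s) :
    Real.exp (-1) ≤ (1 - p) ^ (s - 1) := by
  have hp' : 0 < 1 - p := by linarith [(div_lt_one (by linarith)).2 hs]
  rw [le_div_iff₀ (by linarith)] at hp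
  have hbase : 1 - (1 - p)⁻¹ = -(p / (1 - p)) := by field_simp; ring
  rw [Real.rpow_def_of_pos hp', Real.exp_le_exp]
  calc (-1 : ℝ) ≤ -(p / (1 - p)) * (s - 1) := by
        rw [neg_mul, neg_le_neg_iff, div_mul_eq_mul_div, div_le_one hp']; linarith
    _ ≤ Real.log (1 - p) * (s - 1) := by
        rw [← hbase]; gcongr; exact Real.one_sub_inv_le_log_of_pos hp'

lemma exists_mem_Icc_sub_le_and_le {u : ℕ → ℝ} {a b : ℕ} {y δ : ℝ} (hab : a ≤ b) (ha : u a ≤ y)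
    (hb : y - δ ≤ u b) (hgap : ∀ i, a ≤ i → i < b → u (i + 1) - u i ≤ δ) :
    ∃ c ∈ Set.Icc a b, y - δ ≤ u c ∧ u c ≤ y := by
  classical
  let c := Nat.findGreatest (fun i ↦ a ≤ i ∧ u i ≤ y) b
  obtain ⟨hac, hcy⟩ : a ≤ c ∧ u c ≤ y :=
    Nat.findGreatest_spec (P := fun i ↦ a ≤ i ∧ u i ≤ y) hab ⟨le_rfl, ha⟩
  have hcb : c ≤ b := Nat.findGreatest_le b
  refine ⟨c, ⟨hac, hcb⟩, ?_, hcy⟩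
  rcases hcb.eq_or_lt with h | hlt
  · rwa [h]
  · have hnext : y < u (c + 1) := by
      by_contra! h
      exact Nat.findGreatest_is_greatest c.lt_succ_self hlt ⟨by lia, h⟩
    linarith [hgap c hac hlt]

/-- The success probabilities `P 1 < ⋯ < P K` of a stingy race; indexing starts at `1`, and the
value `P 0` carries no information. -/
structure IsStingyRace (P : ℕ → ℝ) (K : ℕ) : Prop where
  pos_first : 0 < P 1
  last_le_one : P K ≤ 1
  strictMonoOn : StrictMonoOn P (Set.Icc 1 K)

/-- Density of `P 1, …, P K` in the unit interval at scale `δ`; the paper's `ℓ`-density is the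
case `δ = ℓ / K`. -/
structure IsDenseAtScale (δ : ℝ) (P : ℕ → ℝ) (K : ℕ) : Prop where
  first_le : P 1 ≤ δ
  le_last : 1 - δ ≤ P K
  gap_le : ∀ i, 1 ≤ i → i < K → P (i + 1) - P i ≤ δ

/-- The function `p ↦ p ^ (-1 / (n - 1))` through which the success probabilities enter `q` and
`r`. -/
noncomputable def invRoot (n p : ℝ) : ℝ := p ^ (-1 / (n - 1))

/-- The weights `q i` of the coinciding equilibrium. The value at `i = 1` involves `P 0` and is
never used. -/
noncomputable def raceQ (n : ℝ) (P : ℕ → ℝ) (i : ℕ) : ℝ :=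
  1 / P i * (invRoot n (P (i - 1)) - invRoot n (P i))

/-- The quantity `r T` whose sign decides where the coinciding equilibrium starts. If `P T = 1`,
it is `0` by the convention on division. -/
noncomputable def raceR (n : ℝ) (P : ℕ → ℝ) (K T : ℕ) : ℝ :=
  1 / (1 - P T) * (invRoot n (P K) - ∑ i ∈ Icc (T + 1) K, (1 - P i) * raceQ n P i)

/-- `T` is the starting point `T*` of the coinciding equilibrium: the first index with `r T > 0`. -/
def IsStartingPoint (n : ℝ) (P : ℕ → ℝ) (K T : ℕ) : Prop :=
  IsLeast {S ∈ Set.Icc 1 K | 0 < raceR n P K S} T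

section

variable {n p : ℝ}

lemma invRoot_pos (hp : 0 < p) : 0 < invRoot n p := Real.rpow_pos_of_pos hp _

lemma invRoot_antitoneOn (hn : 1 ≤ n) : AntitoneOn (invRoot n) (Set.Ioi 0) :=
  Real.antitoneOn_rpow_Ioi_of_exponent_nonpos
    (div_nonpos_of_nonpos_of_nonneg (by norm_num) (by linarith))

lemma invRoot_rpow_sub_one (hn : n ≠ 1) (hp : 0 ≤ p) : invRoot n p ^ (n - 1) = p⁻¹ := by
  rw [invRoot, ← Real.rpow_mul hp, div_mul_cancel₀ _ (sub_ne_zero.2 hn), Real.rpow_neg_one]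

lemma invRoot_rpow (hn : n ≠ 1) (hp : 0 < p) : invRoot n p ^ n = invRoot n p / p := by
  rw [← mul_one_div, one_div, ← invRoot_rpow_sub_one hn hp.le,
    Real.rpow_sub_one (invRoot_pos hp).ne', mul_div_cancel₀ _ (invRoot_pos hp).ne']

end

namespace IsStingyRace

variable {n δ : ℝ} {P : ℕ → ℝ} {K T i c : ℕ}

lemma pos (hP : IsStingyRace P K) (hi : i ∈ Set.Icc 1 K) : 0 < P i :=
  hP.pos_first.trans_le <| hP.strictMonoOn.monotoneOn ⟨le_rfl, hi.1.trans hi.2⟩ hi hi.1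

lemma lt_one (hP : IsStingyRace P K) (hT : 1 ≤ T) (hTK : T < K) : P T < 1 :=
  (hP.strictMonoOn ⟨hT, hTK.le⟩ ⟨hT.trans hTK.le, le_rfl⟩ hTK).trans_le hP.last_le_one

lemma invRoot_le_invRoot_pred (hP : IsStingyRace P K) (hn : 1 ≤ n) (hi : i ∈ Set.Icc 2 K) :
    invRoot n (P i) ≤ invRoot n (P (i - 1)) := by
  obtain ⟨hi2, hiK⟩ := hi
  have hi' : i ∈ Set.Icc 1 K := ⟨by lia, hiK⟩
  have hpred : i - 1 ∈ Set.Icc 1 K := ⟨by lia, by lia⟩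
  exact invRoot_antitoneOn hn (hP.pos hpred) (hP.pos hi')
    (hP.strictMonoOn.monotoneOn hpred hi' (Nat.sub_le i 1))

lemma raceQ_nonneg (hP : IsStingyRace P K) (hn : 1 ≤ n) (hi : i ∈ Set.Icc 2 K) :
    0 ≤ raceQ n P i :=
  mul_nonneg (one_div_nonneg.2 (hP.pos (Set.Icc_subset_Icc_left one_le_two hi)).le)
    (sub_nonneg.2 (hP.invRoot_le_invRoot_pred hn hi))

lemma raceQ_le (hP : IsStingyRace P K) (hn : 1 < n) (hi : i ∈ Set.Icc 2 K) :
    raceQ n P i ≤ invRoot n (P (i - 1)) ^ n / n - invRoot n (P i) ^ n / n := by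
  have hPi : 0 < P i := hP.pos (Set.Icc_subset_Icc_left one_le_two hi)
  have hx : 0 < invRoot n (P i) := invRoot_pos hPi
  have htangent := mul_rpow_sub_one_mul_sub_le_rpow_sub_rpow hn.le
    (hx.le.trans (hP.invRoot_le_invRoot_pred hn.le hi)) hx
  rw [invRoot_rpow_sub_one hn.ne' hPi.le, ← one_div, mul_assoc, ← raceQ] at htangent
  rwa [← sub_div, le_div_iff₀' (by linarith)]

lemma sum_raceQ_lt (hP : IsStingyRace P K) (hn : 1 < n) (hT : T ∈ Set.Icc 1 K) :
    ∑ i ∈ Icc (T + 1) K, raceQ n P i < invRoot n (P T) ^ n / n := by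
  have hlast : 0 < invRoot n (P K) := invRoot_pos (hP.pos ⟨hT.1.trans hT.2, le_rfl⟩)
  calc ∑ i ∈ Icc (T + 1) K, raceQ n P i
      ≤ ∑ i ∈ Icc (T + 1) K, (invRoot n (P (i - 1)) ^ n / n - invRoot n (P i) ^ n / n) :=
        sum_le_sum fun i hi ↦ hP.raceQ_le hn (Set.Icc_subset_Icc_left (by simpa using hT.1)
          (mem_Icc.1 hi))
    _ = invRoot n (P T) ^ n / n - invRoot n (P K) ^ n / n :=
        sum_Icc_pred_sub (fun i ↦ invRoot n (P i) ^ n / n) hT.2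
    _ < invRoot n (P T) ^ n / n := sub_lt_self _ (by positivity)

lemma div_le_sum_raceQ (hP : IsStingyRace P K) (hn : 1 ≤ n) (hT : 1 ≤ T) (hTc : T ≤ c)
    (hcK : c ≤ K) :
    (invRoot n (P T) - invRoot n (P c)) / P c ≤ ∑ i ∈ Icc (T + 1) K, raceQ n P i := by
  have hmem : ∀ i ∈ Icc (T + 1) K, i ∈ Set.Icc 2 K := fun i hi ↦
    Set.Icc_subset_Icc_left (by simpa using hT) (mem_Icc.1 hi)
  have hsub : Icc (T + 1) c ⊆ Icc (T + 1) K := Icc_subset_Icc_right hcK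
  calc (invRoot n (P T) - invRoot n (P c)) / P c
      = ∑ i ∈ Icc (T + 1) c, 1 / P c * (invRoot n (P (i - 1)) - invRoot n (P i)) := by
        rw [← mul_sum, sum_Icc_pred_sub (fun i ↦ invRoot n (P i)) hTc, one_div_mul_eq_div]
    _ ≤ ∑ i ∈ Icc (T + 1) c, raceQ n P i := by
        refine sum_le_sum fun i hi ↦ mul_le_mul_of_nonneg_right ?_
          (sub_nonneg.2 (hP.invRoot_le_invRoot_pred hn (hmem i (hsub hi))))
        obtain ⟨hTi, hic⟩ := mem_Icc.1 hi
        have hi' : i ∈ Set.Icc 1 K := ⟨by lia, by lia⟩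
        exact one_div_le_one_div_of_le (hP.pos hi')
          (hP.strictMonoOn.monotoneOn hi' ⟨by lia, hcK⟩ hic)
    _ ≤ ∑ i ∈ Icc (T + 1) K, raceQ n P i :=
        sum_le_sum_of_subset_of_nonneg hsub fun i hi _ ↦ hP.raceQ_nonneg hn (hmem i hi)

lemma raceR_eq (hP : IsStingyRace P K) (hT : T ≤ K) :
    raceR n P K T = 1 / (1 - P T) * (invRoot n (P T) - ∑ i ∈ Icc (T + 1) K, raceQ n P i) := by
  have hmul : ∑ i ∈ Icc (T + 1) K, P i * raceQ n P i = invRoot n (P T) - invRoot n (P K) := by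
    rw [← sum_Icc_pred_sub (fun i ↦ invRoot n (P i)) hT]
    refine sum_congr rfl fun i hi ↦ ?_
    obtain ⟨hTi, hiK⟩ := mem_Icc.1 hi
    rw [raceQ, ← mul_assoc, mul_one_div_cancel (hP.pos ⟨by lia, hiK⟩).ne', one_mul]
  simp only [raceR, sub_mul, one_mul, sum_sub_distrib, hmul]
  ring

lemma raceR_pos_iff (hP : IsStingyRace P K) (hT : 1 ≤ T) (hTK : T < K) :
    0 < raceR n P K T ↔ ∑ i ∈ Icc (T + 1) K, raceQ n P i < invRoot n (P T) := by
  rw [hP.raceR_eq hTK.le,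
    mul_pos_iff_of_pos_left (one_div_pos.2 (sub_pos.2 (hP.lt_one hT hTK))), sub_pos]

lemma lt_one_div_of_raceR_nonpos (hP : IsStingyRace P K) (hn : 1 < n) (hT : 1 ≤ T) (hTK : T < K)
    (hr : raceR n P K T ≤ 0) : P T < 1 / n := by
  have hPT : 0 < P T := hP.pos ⟨hT, hTK.le⟩
  have hle : invRoot n (P T) ≤ ∑ i ∈ Icc (T + 1) K, raceQ n P i := by
    rwa [← not_lt, ← hP.raceR_pos_iff hT hTK, not_lt]
  have hlt := hle.trans_lt (hP.sum_raceQ_lt hn ⟨hT, hTK.le⟩)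
  rw [invRoot_rpow hn.ne' hPT, div_div, lt_div_iff₀ (by positivity),
    mul_lt_iff_lt_one_right (invRoot_pos hPT)] at hlt
  rwa [lt_div_iff₀ (by linarith)]

lemma mul_one_sub_rpow_lt_of_raceR_pos (hP : IsStingyRace P K) (hn : 1 < n) (hT : 1 ≤ T)
    (hTc : T < c) (hcK : c ≤ K) (hr : 0 < raceR n P K T) : P c * (1 - P c) ^ (n - 1) < P T := by
  have hc : c ∈ Set.Icc 1 K := ⟨by lia, hcK⟩
  have hPT : 0 < P T := hP.pos ⟨hT, by lia⟩
  have hPc : 0 < P c := hP.pos hc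
  have hPc1 : 0 ≤ 1 - P c :=
    sub_nonneg.2 <| (hP.strictMonoOn.monotoneOn hc ⟨by lia, le_rfl⟩ hcK).trans hP.last_le_one
  have hlt := (hP.div_le_sum_raceQ hn.le hT hTc.le hcK).trans_lt
    ((hP.raceR_pos_iff hT (hTc.trans_le hcK)).1 hr)
  have hroot : (1 - P c) * invRoot n (P T) < invRoot n (P c) := by
    rw [div_lt_iff₀ hPc] at hlt; linarith
  have hpow := Real.rpow_lt_rpow (mul_nonneg hPc1 (invRoot_pos hPT).le) hroot (sub_pos.2 hn)
  rwa [Real.mul_rpow hPc1 (invRoot_pos hPT).le, invRoot_rpow_sub_one hn.ne' hPT.le,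
    invRoot_rpow_sub_one hn.ne' hPc.le, ← div_eq_mul_inv, div_lt_iff₀ hPT, inv_mul_eq_div,
    lt_div_iff₀' hPc] at hpow

lemma one_div_sub_div_exp_one_le (hP : IsStingyRace P K) (hδ : IsDenseAtScale δ P K) (hn : 1 < n)
    (hT : T ∈ Set.Icc 1 K) (hr : 0 < raceR n P K T) : (1 / n - δ) / Real.exp 1 ≤ P T := by
  by_contra! hlt
  have hPT : 0 < P T := hP.pos hT
  have hdiff : 0 < 1 / n - δ := (div_pos_iff_of_pos_right (Real.exp_pos 1)).1 (hPT.trans hlt)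
  have hPT_lt : P T < 1 / n - δ := hlt.trans_le (div_le_self hdiff.le (Real.one_le_exp zero_le_one))
  have hδ_pos : 0 < δ := hP.pos_first.trans_le hδ.first_le
  have hn_inv : 1 / n < 1 := (div_lt_one (by linarith)).2 hn
  obtain ⟨c, ⟨hTc, hcK⟩, hc_ge, hc_le⟩ := exists_mem_Icc_sub_le_and_le hT.2
    (by linarith : P T ≤ 1 / n) (by linarith [hδ.le_last])
    fun i hi hiK ↦ hδ.gap_le i (hT.1.trans hi) hiK
  have hTc' : T < c := hTc.lt_of_ne (by rintro rfl; linarith)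
  refine hlt.not_ge ?_
  calc (1 / n - δ) / Real.exp 1 = (1 / n - δ) * Real.exp (-1) := by
        rw [Real.exp_neg, div_eq_mul_inv]
    _ ≤ P c * (1 - P c) ^ (n - 1) :=
        mul_le_mul hc_ge (exp_neg_one_le_one_sub_rpow hn hc_le) (Real.exp_pos _).le
          (hdiff.le.trans hc_ge)
    _ ≤ P T := (hP.mul_one_sub_rpow_lt_of_raceR_pos hn hT.1 hTc' hcK hr).le

end IsStingyRace

lemma one_div_two_mul_exp_one_mul_add_le {n δ : ℝ} (hn : 0 < n) (hδ : 0 ≤ δ)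
    (hmesh : 4 * Real.exp 1 * n * δ ≤ 1) :
    1 / (2 * Real.exp 1 * n) + δ ≤ (1 / n - δ) / Real.exp 1 := by
  have hnδ : n * δ ≤ Real.exp 1 * (n * δ) :=
    le_mul_of_one_le_left (by positivity) (Real.one_le_exp zero_le_one)
  have hdiff : (1 / n - δ) / Real.exp 1 - (1 / (2 * Real.exp 1 * n) + δ)
      = (1 / 2 - n * δ - Real.exp 1 * (n * δ)) / (Real.exp 1 * n) := by field_simp; ring
  rw [← sub_nonneg, hdiff]
  exact div_nonneg (by linarith) (by positivity)

theorem stmt_18_general {n δ : ℝ} {P : ℕ → ℝ} {K T : ℕ} (hn : 1 < n) (hP : IsStingyRace P K)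
    (hδ : IsDenseAtScale δ P K) (hmesh : 4 * Real.exp 1 * n * δ ≤ 1)
    (hT : IsStartingPoint n P K T) :
    1 / (2 * Real.exp 1 * n) ≤ P (T - 1) ∧ P (T - 1) < 1 / n := by
  obtain ⟨⟨hTmem, hr⟩, hmin⟩ := hT
  have hmargin := one_div_two_mul_exp_one_mul_add_le (by linarith)
    (hP.pos_first.le.trans hδ.first_le) hmesh
  have hlow : 1 / (2 * Real.exp 1 * n) + δ ≤ P T :=
    hmargin.trans (hP.one_div_sub_div_exp_one_le hδ hn hTmem hr)
  have hT_ne : T ≠ 1 := by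
    rintro rfl
    have : 0 < 1 / (2 * Real.exp 1 * n) := by positivity
    linarith [hδ.first_le]
  obtain ⟨hT1, hTK⟩ := hTmem
  obtain ⟨t, rfl⟩ : ∃ t, T = t + 1 := ⟨T - 1, by lia⟩
  have ht : 1 ≤ t := by lia
  have hr_prev : raceR n P K t ≤ 0 := by
    by_contra! h
    exact t.lt_succ_self.not_ge (hmin ⟨⟨ht, by lia⟩, h⟩)
  rw [Nat.add_sub_cancel]
  exact ⟨by linarith [hδ.gap_le t ht hTK], hP.lt_one_div_of_raceR_nonpos hn ht hTK hr_prev⟩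

theorem stmt_18 (n K : ℕ) (ℓ : ℝ) (P q r : ℕ → ℝ) (Tstar : ℕ)
    (hn : 2 ≤ n) (hK : 2 ≤ K)
    (hP1 : 0 < P 1) (hPK : P K ≤ 1)
    (hPmono : ∀ i j, 1 ≤ i → i < j → j ≤ K → P i < P j)
    (hℓ : 0 < ℓ)
    (hdense1 : P 1 ≤ ℓ / K)
    (hdense2 : P K ≥ 1 - ℓ / K)
    (hdense3 : ∀ i, 1 ≤ i → i ≤ K - 1 → P (i+1) - P i ≤ ℓ / K)
    (hKbig : 4 * Real.exp 1 * n * ℓ ≤ (K : ℝ))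
    (hq : ∀ i, q i = (1 / P i) *
      ((P (i-1)) ^ (-(1:ℝ)/((n:ℝ)-1)) - (P i) ^ (-(1:ℝ)/((n:ℝ)-1))))
    (hr : ∀ T, r T = (1 / (1 - P T)) *
      ((P K) ^ (-(1:ℝ)/((n:ℝ)-1)) - ∑ i ∈ Finset.Icc (T+1) K, (1 - P i) * q i))
    (hT1 : 1 ≤ Tstar) (hT2 : Tstar ≤ K) (hT3 : 0 < r Tstar)
    (hT4 : ∀ T, 1 ≤ T → T < Tstar → r T ≤ 0) :
    1 / (2 * Real.exp 1 * n) ≤ P (Tstar - 1) ∧ P (Tstar - 1) < 1 / n := by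
  obtain rfl : q = raceQ n P := funext hq
  obtain rfl : r = raceR n P K := funext hr
  exact stmt_18_general (by exact_mod_cast hn)
    ⟨hP1, hPK, fun i hi j hj hij ↦ hPmono i j hi.1 hij hj.2⟩
    ⟨hdense1, hdense2, fun i hi hiK ↦ hdense3 i hi (Nat.le_sub_one_of_lt hiK)⟩
    (by rw [← mul_div_assoc]; exact div_le_one_of_le₀ hKbig K.cast_nonneg)
    ⟨⟨⟨hT1, hT2⟩, hT3⟩, fun T ⟨hT, hrT⟩ ↦ not_lt.1 fun hlt ↦ (hT4 T hT.1 hlt).not_gt hrT⟩
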